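/- Let J be a finite index set, let x^LB, x^UB ∈ ℝⁿ, let y : J → ℝ satisfy Σ_{j∈J} y_j = 1, and let u : J → ℝⁿ satisfy y_{j'}·x^LB ≤ u_{j'} ≤ y_{j'}·x^UB componentwise for every j' ∈ J. Fix j ∈ J, let x := Σ_{j'∈J} u_{j'}, let L be a finite index set, and let v : L → ℝⁿ satisfy Σ_{l∈L} v_l = u_j. Then (1 − y_j)·x^LB ≤ x − Σ_{l∈L} v_l ≤ (1 − y_j)·x^UB componentwise; that is, the slack disaggregated variable v⁰ := x − Σ_{l∈L} v_l of the equivalent single-level hull reformulation automatically satisfies its indicator-scaled bounds with indicator w⁰ = 1 − y_j. -/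

import Mathlib

section

variable {ι M : Type*} [AddCommGroup M]

lemma sum_sub_apply_le_sum_sub_apply [Preorder M] [IsOrderedAddMonoid M] {s : Finset ι}
    {f g : ι → M} {j : ι} (hj : j ∈ s) (hfg : ∀ i ∈ s, i ≠ j → f i ≤ g i) :
    ∑ i ∈ s, f i - f j ≤ ∑ i ∈ s, g i - g j := by
  classical
  rw [← Finset.sum_erase_eq_sub hj, ← Finset.sum_erase_eq_sub hj]
  exact Finset.sum_le_sum fun i hi ↦ hfg i (Finset.mem_of_mem_erase hi) (Finset.ne_of_mem_erase hi)

lemma one_sub_smul_eq_sum_smul_sub {R : Type*} [Ring R] [Module R M] {s : Finset ι} {y : ι → R}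
    (hy : ∑ i ∈ s, y i = 1) (j : ι) (a : M) :
    (1 - y j) • a = ∑ i ∈ s, y i • a - y j • a := by
  rw [← hy, sub_smul, Finset.sum_smul]

end

theorem slack_disaggregated_bounds_general
    {R M J L : Type*} [Ring R] [AddCommGroup M] [Preorder M] [IsOrderedAddMonoid M] [Module R M]
    [Fintype J] [Fintype L] (xLB xUB : M) (y : J → R) (u : J → M)
    (hy : ∑ j, y j = 1) (j : J)
    (hub : ∀ j' ≠ j, y j' • xLB ≤ u j' ∧ u j' ≤ y j' • xUB)
    (v : L → M) (hv : ∑ l, v l = u j) :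
    (1 - y j) • xLB ≤ (∑ j', u j') - ∑ l, v l ∧
      (∑ j', u j') - ∑ l, v l ≤ (1 - y j) • xUB := by
  rw [hv, one_sub_smul_eq_sum_smul_sub hy, one_sub_smul_eq_sum_smul_sub hy]
  have hj : j ∈ Finset.univ := Finset.mem_univ j
  exact ⟨sum_sub_apply_le_sum_sub_apply hj fun j' _ hne ↦ (hub j' hne).1,
    sum_sub_apply_le_sum_sub_apply hj fun j' _ hne ↦ (hub j' hne).2⟩

/-- The slack disaggregated variable `v⁰ = x - ∑ l, v l` of the equivalent
single-level hull reformulation automatically satisfies its indicator-scaled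
bounds with indicator `w⁰ = 1 - y j` (equations (1)–(4) of the proof of
Theorem 1). -/
theorem slack_disaggregated_bounds
    {n : ℕ} {J : Type*} [Fintype J] {L : Type*} [Fintype L]
    (xLB xUB : Fin n → ℝ) (y : J → ℝ) (u : J → Fin n → ℝ)
    (hy : ∑ j, y j = 1)
    (hub : ∀ j', y j' • xLB ≤ u j' ∧ u j' ≤ y j' • xUB)
    (j : J) (v : L → Fin n → ℝ)
    (hv : ∑ l, v l = u j) :
    (1 - y j) • xLB ≤ (∑ j', u j') - ∑ l, v l ∧
      (∑ j', u j') - ∑ l, v l ≤ (1 - y j) • xUB :=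
  slack_disaggregated_bounds_general xLB xUB y u hy j (fun j' _ ↦ hub j') v hv
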